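/- Let n ≥ 2, d ≥ 1, L ≥ 0 be integers with 2L ≤ d, let S ⊆ [n]^∞ be a d-maximal set containing no (L+1)-ball, let w ∈ S, and let ℓ ≥ 0, and let m, k be integers with m + L ≤ k ≤ d. Let t be a template of weight m that is regular with respect to w. Then, writing S^{(ℓ)}_k = {a ∈ S^{(ℓ)} : dist(a,w) = k}, we have |S^{(ℓ)}_k[t]| ≤ Sun(d+n, 2L)·(n/2)^{k−m−L}·binom(2d−m−L, k−m−L) (as real numbers, with Sun(p,0) interpreted as 1). -/

import Mathlib

/-- Hamming distance between infinite words over `Fin n`, as an extended natural number. -/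
noncomputable def hDist (n : ℕ) (a b : ℕ → Fin n) : ℕ∞ := {i | a i ≠ b i}.encard

/-- The `r`-ball around `a`. -/
def hBall (n : ℕ) (a : ℕ → Fin n) (r : ℕ) : Set (ℕ → Fin n) := {x | hDist n x a ≤ (r : ℕ∞)}

/-- `S` is `d`-maximal: it has diameter `d` and any point within distance `d`
of all of `S` already belongs to `S`. -/
def IsDMaximal (n d : ℕ) (S : Set (ℕ → Fin n)) : Prop :=
  (∀ a ∈ S, ∀ b ∈ S, hDist n a b ≤ (d : ℕ∞)) ∧
  (∃ a ∈ S, ∃ b ∈ S, hDist n a b = (d : ℕ∞)) ∧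
  (∀ x : ℕ → Fin n, (∀ s ∈ S, hDist n x s ≤ (d : ℕ∞)) → x ∈ S)

/-- `S` contains an `r`-ball. -/
def ContainsBall (n : ℕ) (S : Set (ℕ → Fin n)) (r : ℕ) : Prop :=
  ∃ a, hBall n a r ⊆ S

/-- `S^(ℓ)`: centers of `ℓ`-balls contained in `S` that are not contained in any
`(ℓ+1)`-ball inside `S`. -/
def Sell (n : ℕ) (S : Set (ℕ → Fin n)) (ℓ : ℕ) : Set (ℕ → Fin n) :=
  {a ∈ S | hBall n a ℓ ⊆ S ∧
    ¬ ∃ b, hBall n a ℓ ⊆ hBall n b (ℓ + 1) ∧ hBall n b (ℓ + 1) ⊆ S}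

/-- A word `a` fits the template `t` (entries `none` are wildcards). -/
def Fits (n : ℕ) (a : ℕ → Fin n) (t : ℕ → Option (Fin n)) : Prop :=
  ∀ i x, t i = some x → a i = x

/-- A template is regular with respect to `w` if it never fixes the letter of `w`. -/
def RegularWrt (n : ℕ) (w : ℕ → Fin n) (t : ℕ → Option (Fin n)) : Prop :=
  ∀ i, t i ≠ some (w i)

/-- A family of `p` sets forming a sunflower: `p` distinct sets whose pairwise
intersections are all equal. -/
def IsSunflowerFam (p : ℕ) (F : Finset (Finset ℕ)) : Prop :=
  F.card = p ∧ ∃ C : Finset ℕ, ∀ A ∈ F, ∀ B ∈ F, A ≠ B → A ∩ B = C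

/-- `Sun p k`: the least `N` such that every family of more than `N` distinct
`k`-element sets contains a `p`-sunflower. -/
noncomputable def Sun (p k : ℕ) : ℕ :=
  sInf {N : ℕ | ∀ F : Finset (Finset ℕ), (∀ A ∈ F, A.card = k) → N < F.card →
    ∃ G ⊆ F, IsSunflowerFam p G}


theorem hDist_eq_card {n : ℕ} {a b : ℕ → Fin n} {D : Finset ℕ}
    (h : ∀ i, i ∈ D ↔ a i ≠ b i) : hDist n a b = (D.card : ℕ∞) := by
  have : {i | a i ≠ b i} = (D : Set ℕ) := by
    ext i; simp [h i]
  rw [hDist, this, Set.encard_coe_eq_coe_finsetCard]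

theorem hDist_exists {n : ℕ} {a b : ℕ → Fin n} {d : ℕ} (h : hDist n a b ≤ (d : ℕ∞)) :
    ∃ D : Finset ℕ, (∀ i, i ∈ D ↔ a i ≠ b i) ∧ D.card ≤ d := by
  have hf : {i | a i ≠ b i}.Finite := by
    rw [hDist] at h
    exact Set.finite_of_encard_le_coe h
  refine ⟨hf.toFinset, fun i => by simp, ?_⟩
  have := hDist_eq_card (n := n) (a := a) (b := b) (D := hf.toFinset) (fun i => by simp)
  rw [this] at h
  exact_mod_cast h

theorem hDist_triangle {n : ℕ} (a b c : ℕ → Fin n) :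
    hDist n a c ≤ hDist n a b + hDist n b c := by
  unfold hDist
  refine le_trans (Set.encard_le_encard ?_) (Set.encard_union_le _ _)
  intro i hi
  simp only [Set.mem_union, Set.mem_ofPred_eq] at *
  by_contra hh
  push Not at hh
  exact hi (hh.1.trans hh.2)

theorem hDist_symm {n : ℕ} (a b : ℕ → Fin n) : hDist n a b = hDist n b a := by
  unfold hDist
  congr 1
  ext i
  simp [ne_comm]

theorem ball_dist {n d ℓ : ℕ} (hn : 2 ≤ n) {S : Set (ℕ → Fin n)} (hmax : IsDMaximal n d S)
    {a c : ℕ → Fin n} (ha : hBall n a ℓ ⊆ S) (hc : c ∈ S) {X : Finset ℕ}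
    (hX : ∀ i, i ∈ X ↔ a i ≠ c i) : X.card + ℓ ≤ d := by
  classical
  obtain ⟨Z, hXZ, hZ⟩ := Infinite.exists_superset_card_eq X (X.card + ℓ) (by omega)
  have : Nontrivial (Fin n) := Fin.nontrivial_iff_two_le.mpr hn
  choose g hg using fun i => exists_ne (c i)
  let a' : ℕ → Fin n := fun i => if i ∈ Z \ X then g i else a i
  have h1 : hDist n a' c = (Z.card : ℕ∞) := by
    apply hDist_eq_card
    intro i
    by_cases hi : i ∈ Z \ X
    · simp only [a', hi, if_true]
      simp [(Finset.mem_sdiff.mp hi).1, hg i]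
    · simp only [a', hi, if_false]
      rw [← hX i]
      simp only [Finset.mem_sdiff] at hi
      constructor
      · intro h; by_contra h'; exact hi ⟨h, h'⟩
      · intro h; exact hXZ h
  have h2 : hDist n a' a = ((Z \ X).card : ℕ∞) := by
    apply hDist_eq_card
    intro i
    by_cases hi : i ∈ Z \ X
    · simp only [a', hi, if_true]
      have : a i = c i := by
        by_contra h
        exact (Finset.mem_sdiff.mp hi).2 ((hX i).2 h)
      simp [this, hg i]
    · simp only [a', hi, if_false]; simp
  have h3 : a' ∈ S := by
    apply ha
    show hDist n a' a ≤ _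
    rw [h2, Finset.card_sdiff_of_subset hXZ, hZ]
    simp
  have := hmax.1 a' h3 c hc
  rw [h1, hZ] at this
  exact_mod_cast this

theorem sunflower_exists (p : ℕ) (k : ℕ) : ∃ N : ℕ, ∀ F : Finset (Finset ℕ),
    (∀ A ∈ F, A.card = k) → N < F.card → ∃ G ⊆ F, IsSunflowerFam p G := by
  classical
  induction k with
  | zero =>
    refine ⟨1, fun F hF hc => ?_⟩
    exfalso
    have : F ⊆ {∅} := by
      intro A hA
      simpa using hF A hA
    have := Finset.card_le_card this
    simp at this
    omega
  | succ k ih =>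
    obtain ⟨N, hN⟩ := ih
    refine ⟨p * (k + 1) * N, fun F hF hc => ?_⟩
    let Q : Finset (Finset (Finset ℕ)) :=
      F.powerset.filter (fun G => ∀ A ∈ G, ∀ B ∈ G, A ≠ B → A ∩ B = ∅)
    have hQ : Q.Nonempty := ⟨∅, by simp [Q]⟩
    obtain ⟨G, hGQ, hGm⟩ := Finset.exists_max_image Q Finset.card hQ
    have hG : G ⊆ F ∧ ∀ A ∈ G, ∀ B ∈ G, A ≠ B → A ∩ B = ∅ := by
      simpa [Q] using hGQ
    by_cases hp : p ≤ G.card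
    · obtain ⟨H, hHG, hH⟩ := Finset.exists_subset_card_eq hp
      exact ⟨H, hHG.trans hG.1, hH, ∅, fun A hA B hB => hG.2 A (hHG hA) B (hHG hB)⟩
    · push Not at hp
      let U := G.biUnion id
      have hU : U.card ≤ p * (k + 1) := by
        calc U.card ≤ ∑ A ∈ G, A.card := Finset.card_biUnion_le
          _ = ∑ A ∈ G, (k + 1) := Finset.sum_congr rfl (fun A hA => hF A (hG.1 hA))
          _ = G.card * (k + 1) := by simp
          _ ≤ _ := Nat.mul_le_mul_right _ hp.le
      have hmeet : ∀ A ∈ F, ∃ x ∈ U, x ∈ A := by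
        intro A hA
        by_contra hcon
        push Not at hcon
        have hdis : ∀ B ∈ G, A ∩ B = ∅ := by
          intro B hB
          ext x
          simp only [Finset.mem_inter, Finset.notMem_empty, iff_false]
          rintro ⟨h1, h2⟩
          exact hcon x (Finset.mem_biUnion.mpr ⟨B, hB, h2⟩) h1
        have hAG : A ∉ G := by
          intro h
          have h1 := hdis A h
          have h2 := hF A hA
          simp at h1
          simp [h1] at h2
        have : insert A G ∈ Q := by
          simp only [Q, Finset.mem_filter, Finset.mem_powerset]
          refine ⟨Finset.insert_subset hA hG.1, ?_⟩
          intro X hX Y hY hXY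
          rcases Finset.mem_insert.mp hX with h1 | h1
          · rcases Finset.mem_insert.mp hY with h2 | h2
            · exact absurd (h1.trans h2.symm) hXY
            · rw [h1]; exact hdis Y h2
          · rcases Finset.mem_insert.mp hY with h2 | h2
            · rw [h2, Finset.inter_comm]; exact hdis X h1
            · exact hG.2 X h1 Y h2 hXY
        have := hGm _ this
        rw [Finset.card_insert_of_notMem hAG] at this
        omega
      obtain ⟨x, hx⟩ : ∃ x, N < (F.filter (fun A => x ∈ A)).card := by
        by_contra hcon
        push Not at hcon
        have h1 : F ⊆ U.biUnion (fun x => F.filter (fun A => x ∈ A)) := by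
          intro A hA
          obtain ⟨x, hx, hxA⟩ := hmeet A hA
          simp only [Finset.mem_biUnion, Finset.mem_filter]
          exact ⟨x, hx, hA, hxA⟩
        have h2 := (Finset.card_le_card h1).trans Finset.card_biUnion_le
        have h3 := Finset.sum_le_sum (s := U) (fun x _ => hcon x)
        simp only [Finset.sum_const, smul_eq_mul] at h3
        have h4 := Nat.mul_le_mul_right N hU
        omega
      set F' := F.filter (fun A => x ∈ A) with hF'
      have hinj : Set.InjOn (fun A : Finset ℕ => A.erase x) (F' : Set (Finset ℕ)) := by
        intro A hA B hB hAB
        simp only [hF', Finset.coe_filter, Set.mem_ofPred_eq] at hA hB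
        simp only at hAB
        rw [← Finset.insert_erase hA.2, ← Finset.insert_erase hB.2, hAB]
      obtain ⟨G', hG', hG'c, C, hC⟩ := hN (F'.image (fun A => A.erase x))
        (by
          intro A hA
          obtain ⟨B, hB, rfl⟩ := Finset.mem_image.mp hA
          simp only [hF', Finset.mem_filter] at hB
          rw [Finset.card_erase_of_mem hB.2, hF B hB.1]; rfl)
        (by rwa [Finset.card_image_of_injOn hinj])
      have hx' : ∀ A ∈ G', x ∉ A ∧ insert x A ∈ F := by
        intro A hA
        obtain ⟨B, hB, rfl⟩ := Finset.mem_image.mp (hG' hA)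
        simp only [hF', Finset.mem_filter] at hB
        simp only [Finset.insert_erase hB.2]
        exact ⟨by simp, hB.1⟩
      refine ⟨G'.image (fun A => insert x A), ?_, ?_, insert x C, ?_⟩
      · intro A hA
        obtain ⟨B, hB, rfl⟩ := Finset.mem_image.mp hA
        exact (hx' B hB).2
      · rw [Finset.card_image_of_injOn, hG'c]
        intro A hA B hB hAB
        simp only at hAB
        rw [← Finset.erase_insert (hx' A hA).1, ← Finset.erase_insert (hx' B hB).1, hAB]
      · intro A hA B hB hAB
        obtain ⟨A', hA', rfl⟩ := Finset.mem_image.mp hA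
        obtain ⟨B', hB', rfl⟩ := Finset.mem_image.mp hB
        rw [← Finset.insert_inter_distrib, hC A' hA' B' hB']
        rintro rfl
        exact hAB rfl

theorem Sun_spec (p k : ℕ) : ∀ F : Finset (Finset ℕ), (∀ A ∈ F, A.card = k) → Sun p k < F.card →
    ∃ G ⊆ F, IsSunflowerFam p G :=
  Nat.sInf_mem (s := {N : ℕ | ∀ F : Finset (Finset ℕ), (∀ A ∈ F, A.card = k) → N < F.card →
    ∃ G ⊆ F, IsSunflowerFam p G}) (sunflower_exists p k)

theorem core_lemma {n d ℓ s : ℕ} (hn : 2 ≤ n) {S : Set (ℕ → Fin n)} (hmax : IsDMaximal n d S)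
    (J : Finset (ℕ → Fin n)) (hJ : J.card = d + n) (hJS : ∀ a ∈ J, a ∈ Sell n S ℓ)
    (v : ℕ → Fin n) (P : (ℕ → Fin n) → Finset ℕ)
    (hP : ∀ a ∈ J, ∀ i, i ∈ P a ↔ a i ≠ v i) (hPs : ∀ a ∈ J, (P a).card = s) (hs : 1 ≤ s)
    (hdis : ∀ a ∈ J, ∀ b ∈ J, a ≠ b → Disjoint (P a) (P b)) : False := by
  classical
  have hJne : J.Nonempty := by rw [← Finset.card_pos]; omega
  obtain ⟨a, ha⟩ := hJne
  have key : ∀ c ∈ S, hDist n v c + ((ℓ + s : ℕ) : ℕ∞) ≤ (d : ℕ∞) := by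
    intro c hc
    have hX : ∀ a ∈ J, ∃ X : Finset ℕ, (∀ i, i ∈ X ↔ a i ≠ c i) ∧ X.card + ℓ ≤ d := by
      intro a ha
      obtain ⟨X, hX, -⟩ := hDist_exists (hmax.1 a (hJS a ha).1 c hc)
      exact ⟨X, hX, ball_dist hn hmax (hJS a ha).2.1 hc hX⟩
    choose! X hX hXc using hX
    let D := (P a ∪ X a).filter (fun i => v i ≠ c i)
    have hD : ∀ i, i ∈ D ↔ v i ≠ c i := by
      intro i
      simp only [D, Finset.mem_filter, Finset.mem_union, hP a ha, hX a ha]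
      constructor
      · exact fun h => h.2
      · intro h
        refine ⟨?_, h⟩
        by_contra hh
        push Not at hh
        exact h (hh.1.symm.trans hh.2)
    rw [hDist_eq_card hD]
    by_cases hex : ∃ a ∈ J, Disjoint D (P a)
    · obtain ⟨b, hb, hbd⟩ := hex
      have hsub : D ∪ P b ⊆ X b := by
        intro i hi
        rw [hX b hb]
        rcases Finset.mem_union.mp hi with h | h
        · have h1 : i ∉ P b := Finset.disjoint_left.mp hbd h
          rw [hP b hb, not_not] at h1
          rw [h1]; exact (hD i).1 h
        · have h1 : i ∉ D := Finset.disjoint_right.mp hbd h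
          rw [hD, not_not] at h1
          rw [← h1]; exact (hP b hb i).1 h
      have h1 := Finset.card_le_card hsub
      rw [Finset.card_union_of_disjoint hbd, hPs b hb] at h1
      have := hXc b hb
      exact_mod_cast (by omega : D.card + (ℓ + s) ≤ d)
    · exfalso
      push Not at hex
      have h1 : ∀ b ∈ J, 1 ≤ (D ∩ P b).card := by
        intro b hb
        rw [Nat.one_le_iff_ne_zero, Ne, Finset.card_eq_zero, ← Finset.disjoint_iff_inter_eq_empty]
        exact hex b hb
      have h2 : ∀ b ∈ J, D.card ≤ d + (D ∩ P b).card := by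
        intro b hb
        have : D \ P b ⊆ X b := by
          intro i hi
          rw [Finset.mem_sdiff, hP b hb, not_not] at hi
          rw [hX b hb, hi.2]
          exact (hD i).1 hi.1
        have h3 := Finset.card_le_card this
        have h4 := Finset.card_sdiff_add_card_inter D (P b)
        have := hXc b hb
        omega
      have h3 : ∑ b ∈ J, (D ∩ P b).card ≤ D.card := by
        rw [← Finset.card_biUnion]
        · apply Finset.card_le_card
          intro i hi
          obtain ⟨b, _, hb⟩ := Finset.mem_biUnion.mp hi
          exact (Finset.mem_inter.mp hb).1
        · intro b hb b' hb' hne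
          exact (hdis b hb b' hb' hne).mono Finset.inter_subset_right Finset.inter_subset_right
      have h4 := Finset.sum_le_sum h1
      have h5 := Finset.sum_le_sum h2
      rw [Finset.sum_add_distrib] at h5
      simp only [Finset.sum_const, smul_eq_mul, hJ, mul_one] at h4 h5
      have h6 : d + n ≤ D.card := h4.trans h3
      have h7 : (d + n) * D.card ≤ (d + n) * d + D.card := h5.trans (by omega)
      nlinarith
  have hball : hBall n v (ℓ + s) ⊆ S := by
    intro x hx
    apply hmax.2.2
    intro c hc
    refine (hDist_triangle x v c).trans ?_
    refine le_trans ?_ (key c hc)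
    rw [add_comm]
    gcongr
    exact hx
  have hPa : (P a).Nonempty := by rw [← Finset.card_pos, hPs a ha]; omega
  obtain ⟨i0, hi0⟩ := hPa
  apply (hJS a ha).2.2
  let b := Function.update a i0 (v i0)
  have hab : hDist n a b ≤ 1 := by
    unfold hDist
    refine le_trans (Set.encard_le_encard (t := {i0}) ?_) (by simp)
    intro i hi
    by_contra h
    simp only [Set.mem_singleton_iff] at h
    simp [b, Function.update_of_ne h] at hi
  have hbv : hDist n b v = ((P a).erase i0).card := by
    apply hDist_eq_card
    intro i
    by_cases h : i = i0
    · subst h; simp [b]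
    · simp [b, Function.update_of_ne h, h, hP a ha]
  refine ⟨b, ?_, ?_⟩
  · intro x hx
    refine (hDist_triangle x a b).trans ?_
    push_cast
    exact add_le_add hx hab
  · refine Set.Subset.trans ?_ hball
    intro x hx
    refine (hDist_triangle x b v).trans ?_
    refine (add_le_add hx (le_of_eq hbv)).trans ?_
    rw [Finset.card_erase_of_mem hi0, hPs a ha]
    exact_mod_cast (by omega : ℓ + 1 + (s - 1) ≤ ℓ + s)

theorem base_case {n d L ℓ : ℕ} (hn : 2 ≤ n) (hd : 1 ≤ d) {S : Set (ℕ → Fin n)}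
    (hmax : IsDMaximal n d S) (w u : ℕ → Fin n) (T : Finset ℕ)
    (hT : ∀ i, i ∈ T ↔ u i ≠ w i)
    (F : Finset (ℕ → Fin n))
    (hF : ∀ a ∈ F, a ∈ Sell n S ℓ ∧ hDist n a w = ((T.card + L : ℕ) : ℕ∞) ∧
      ∀ i ∈ T, a i = u i) : F.card ≤ Sun (d + n) (2 * L) := by
  classical
  by_contra hcon
  push Not at hcon
  have hB : ∀ a ∈ F, ∃ B : Finset ℕ, (∀ i, i ∈ B ↔ a i ≠ u i) ∧ B.card = L := by
    intro a ha
    obtain ⟨h1, h2, h3⟩ := hF a ha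
    obtain ⟨A, hA, -⟩ := hDist_exists h2.le
    rw [hDist_eq_card hA] at h2
    have h2' : A.card = T.card + L := by exact_mod_cast h2
    have hTA : T ⊆ A := by
      intro i hi
      rw [hA, h3 i hi]
      exact (hT i).1 hi
    refine ⟨A \ T, ?_, ?_⟩
    · intro i
      rw [Finset.mem_sdiff, hA]
      by_cases hi : i ∈ T
      · simp [hi, h3 i hi]
      · have : u i = w i := by
          by_contra h; exact hi ((hT i).2 h)
        simp [hi, this]
    · rw [Finset.card_sdiff_of_subset hTA, h2']; omega
  choose! B hB hBc using hB
  let enc : ℕ × Option (Fin n) → ℕ := Encodable.encode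
  have henc : Function.Injective enc := Encodable.encode_injective
  let g : (ℕ → Fin n) → Finset ℕ := fun a =>
    (B a).image (fun i => enc (i, none)) ∪ (B a).image (fun i => enc (i, some (a i)))
  have g1 : ∀ a i, enc (i, none) ∈ g a ↔ i ∈ B a := by
    intro a i
    simp [g, henc.eq_iff]
  have g2 : ∀ a i x, enc (i, some x) ∈ g a ↔ i ∈ B a ∧ a i = x := by
    intro a i x
    simp only [g, Finset.mem_union, Finset.mem_image, henc.eq_iff, Prod.mk.injEq, Option.some.injEq]
    constructor
    · rintro (⟨j, _, _, h⟩ | ⟨j, h1, rfl, h3⟩)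
      · exact absurd h (by simp)
      · exact ⟨h1, h3⟩
    · rintro ⟨h1, h2⟩
      exact Or.inr ⟨i, h1, rfl, h2⟩
  have ginj : Set.InjOn g (F : Set (ℕ → Fin n)) := by
    intro a ha b hb hab
    have ha' : a ∈ F := ha
    have hb' : b ∈ F := hb
    funext i
    have e1 : i ∈ B a ↔ i ∈ B b := by rw [← g1, ← g1, hab]
    by_cases hi : i ∈ B a
    · have := (g2 a i (a i)).2 ⟨hi, rfl⟩
      rw [hab] at this
      exact ((g2 b i (a i)).1 this).2.symm
    · have hi' := hi
      rw [e1] at hi'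
      rw [hB a ha', not_not] at hi
      rw [hB b hb', not_not] at hi'
      rw [hi, hi']
  obtain ⟨G, hGF, hGc, C, hC⟩ := Sun_spec (d + n) (2 * L) (F.image g)
    (by
      intro A hA
      obtain ⟨a, ha, rfl⟩ := Finset.mem_image.mp hA
      simp only [g]
      rw [Finset.card_union_of_disjoint, Finset.card_image_of_injective,
        Finset.card_image_of_injective, hBc a ha]
      · ring
      · intro i j hij
        have := henc hij
        simp at this
        exact this.1
      · intro i j hij
        have := henc hij
        simpa using this
      · rw [Finset.disjoint_left]
        intro x hx hy
        obtain ⟨i, _, rfl⟩ := Finset.mem_image.mp hx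
        obtain ⟨j, _, hj⟩ := Finset.mem_image.mp hy
        have := henc hj
        simp at this)
    (by rwa [Finset.card_image_of_injOn ginj])
  let J := F.filter (fun a => g a ∈ G)
  have hJF : ∀ a ∈ J, a ∈ F := fun a ha => (Finset.mem_filter.mp ha).1
  have hJG : ∀ a ∈ J, g a ∈ G := fun a ha => (Finset.mem_filter.mp ha).2
  have hJc : J.card = d + n := by
    rw [← hGc]
    have : J.image g = G := by
      ext X
      constructor
      · intro hX
        obtain ⟨a, ha, rfl⟩ := Finset.mem_image.mp hX
        exact hJG a ha
      · intro hX
        obtain ⟨a, ha, rfl⟩ := Finset.mem_image.mp (hGF hX)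
        exact Finset.mem_image.mpr ⟨a, Finset.mem_filter.mpr ⟨ha, hX⟩, rfl⟩
    rw [← this, Finset.card_image_of_injOn]
    exact ginj.mono (fun a ha => hJF a ha)
  have hCJ : ∀ a ∈ J, ∀ b ∈ J, a ≠ b → g a ∩ g b = C := by
    intro a ha b hb hab
    apply hC _ (hJG a ha) _ (hJG b hb)
    intro h
    exact hab (ginj (hJF a ha) (hJF b hb) h)
  have hCsub : ∀ a ∈ J, C ⊆ g a := by
    intro a ha
    obtain ⟨b, hb, hba⟩ := Finset.exists_mem_ne (s := J) (by omega) a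
    rw [← hCJ a ha b hb hba.symm]
    exact Finset.inter_subset_left
  have hcoreval : ∀ i, enc (i, none) ∈ C → ∀ a ∈ J, ∀ b ∈ J, a i = b i := by
    intro i hi
    obtain ⟨e, he, e', he', hne, hee⟩ := Finset.exists_ne_map_eq_of_card_lt_of_maps_to
      (s := J) (t := (Finset.univ : Finset (Fin n))) (f := fun a => a i)
      (by simp; omega) (by intro a _; simp)
    have hm : enc (i, some (e i)) ∈ C := by
      rw [← hCJ e he e' he' hne, Finset.mem_inter, g2, g2]
      exact ⟨⟨(g1 e i).1 (hCsub e he hi), rfl⟩, (g1 e' i).1 (hCsub e' he' hi), hee.symm⟩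
    have : ∀ a ∈ J, a i = e i := fun a ha => ((g2 a i _).1 (hCsub a ha hm)).2
    intro a ha b hb
    rw [this a ha, this b hb]
  have hJne : J.Nonempty := by rw [← Finset.card_pos]; omega
  obtain ⟨a0, ha0⟩ := hJne
  let v : ℕ → Fin n := fun i => if enc (i, none) ∈ C then a0 i else u i
  let P : (ℕ → Fin n) → Finset ℕ := fun a => (B a).filter (fun i => enc (i, none) ∉ C)
  have hP : ∀ a ∈ J, ∀ i, i ∈ P a ↔ a i ≠ v i := by
    intro a ha i
    by_cases hi : enc (i, none) ∈ C
    · simp [P, v, hi, hcoreval i hi a ha a0 ha0]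
    · simp [P, v, hi, hB a (hJF a ha)]
  have hPs : ∀ a ∈ J, (P a).card = (P a0).card := by
    have hcc : ∀ a ∈ J, ((B a).filter (fun i => enc (i, none) ∈ C)) =
        (B a0).filter (fun i => enc (i, none) ∈ C) := by
      intro a ha
      ext i
      simp only [Finset.mem_filter]
      constructor
      · rintro ⟨_, h⟩; exact ⟨(g1 _ _).1 (hCsub a0 ha0 h), h⟩
      · rintro ⟨_, h⟩; exact ⟨(g1 _ _).1 (hCsub a ha h), h⟩
    intro a ha
    have h1 := Finset.card_filter_add_card_filter_not (s := B a) (fun i => enc (i, none) ∈ C)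
    have h2 := Finset.card_filter_add_card_filter_not (s := B a0) (fun i => enc (i, none) ∈ C)
    rw [hcc a ha, hBc a (hJF a ha)] at h1
    rw [hBc a0 (hJF a0 ha0)] at h2
    simp only [P]
    omega
  refine core_lemma hn hmax J hJc (fun a ha => (hF a (hJF a ha)).1) v P hP hPs ?_ ?_
  · by_contra hs
    have hs0 : (P a0).card = 0 := by omega
    have hall : ∀ a ∈ J, a = v := by
      intro a ha
      have h0 := hPs a ha
      rw [hs0, Finset.card_eq_zero] at h0
      funext i
      by_contra h
      have := (hP a ha i).2 h
      rw [h0] at this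
      simp at this
    obtain ⟨b, hb, hba⟩ := Finset.exists_mem_ne (s := J) (by omega) a0
    exact hba ((hall b hb).trans (hall a0 ha0).symm)
  · intro a ha b hb hab
    rw [Finset.disjoint_left]
    intro i hi hi'
    simp only [P, Finset.mem_filter] at hi hi'
    apply hi.2
    rw [← hCJ a ha b hb hab, Finset.mem_inter, g1, g1]
    exact ⟨hi.1, hi'.1⟩

theorem arith_step {d L k q m e f M : ℕ} (hk : k = m + L + q) (hkd : k ≤ d)
    (hM : M + d = e + f + (k - m)) (h1 : d ≤ e + f + L) (h2 : e + m ≤ d + f) :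
    2 * e * q ≤ (2 * d - m - L) * M := by
  obtain ⟨y, hy⟩ : ∃ y, y = 2 * d - m - L := ⟨_, rfl⟩
  rw [← hy]
  have hqy : q ≤ y := by omega
  by_cases h : 2 * e ≤ y
  · have : q ≤ M := by omega
    exact Nat.mul_le_mul h this
  · push Not at h
    obtain ⟨z, hz⟩ := Nat.exists_eq_add_of_lt h
    have hMz : q + (z + 1) ≤ M := by omega
    calc 2 * e * q = y * q + (z + 1) * q := by rw [hz]; ring
      _ ≤ y * q + (z + 1) * y := by gcongr
      _ = y * (q + (z + 1)) := by ring
      _ ≤ y * M := by gcongr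

theorem induct {n d L ℓ k : ℕ} (hn : 2 ≤ n) (hd : 1 ≤ d) {S : Set (ℕ → Fin n)}
    (hmax : IsDMaximal n d S) (hball : ¬ ContainsBall n S (L + 1))
    (w : ℕ → Fin n) (hw : w ∈ S) (hkd : k ≤ d) (q : ℕ) :
    ∀ (u : ℕ → Fin n) (T : Finset ℕ) (_ : ∀ i, i ∈ T ↔ u i ≠ w i) (_ : k = T.card + L + q)
    (F : Finset (ℕ → Fin n))
    (_ : ∀ a ∈ F, a ∈ Sell n S ℓ ∧ hDist n a w = (k : ℕ∞) ∧ ∀ i ∈ T, a i = u i),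
    (F.card : ℝ) ≤ (Sun (d + n) (2 * L) : ℝ) * ((n : ℝ) / 2) ^ q *
      ((2 * d - T.card - L).choose q : ℝ) := by
  classical
  induction q with
  | zero =>
    intro u T hT hk F hF
    have := base_case (L := L) hn hd hmax w u T hT F (by
      intro a ha
      have := hF a ha
      rw [hk] at this
      exact this)
    simp only [pow_zero, Nat.choose_zero_right, mul_one, Nat.cast_one]
    exact_mod_cast this
  | succ q ih =>
    intro u T hT hk F hF
    obtain ⟨c, hc, D, hD, hDL⟩ : ∃ c ∈ S, ∃ D : Finset ℕ, (∀ i, i ∈ D ↔ u i ≠ c i) ∧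
        d ≤ D.card + L := by
      have h1 : ¬ hBall n u (L + 1) ⊆ S := fun h => hball ⟨u, h⟩
      obtain ⟨x, hx, hxS⟩ := Set.not_subset.mp h1
      have h2 : ∃ c ∈ S, ¬ hDist n x c ≤ (d : ℕ∞) := by
        by_contra h
        push Not at h
        exact hxS (hmax.2.2 x h)
      obtain ⟨c, hc, hxc⟩ := h2
      have huc : hDist n u c ≤ ((T.card + d : ℕ) : ℕ∞) := by
        refine (hDist_triangle u w c).trans ?_
        push_cast
        exact add_le_add (hDist_eq_card hT).le (hmax.1 w hw c hc)
      obtain ⟨D, hD, -⟩ := hDist_exists huc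
      refine ⟨c, hc, D, hD, ?_⟩
      by_contra hlt
      apply hxc
      refine (hDist_triangle x u c).trans ?_
      rw [hDist_eq_card hD]
      refine (add_le_add (show hDist n x u ≤ ((L + 1 : ℕ) : ℕ∞) from hx) le_rfl).trans ?_
      exact_mod_cast (by omega : L + 1 + D.card ≤ d)
    let E := D \ T
    have hcard : E.card + (D ∩ T).card = D.card := Finset.card_sdiff_add_card_inter D T
    have hEw : ∀ i ∈ E, u i = w i ∧ c i ≠ w i := by
      intro i hi
      rw [Finset.mem_sdiff, hD, hT, not_not] at hi
      exact ⟨hi.2, fun h => hi.1 (hi.2.trans h.symm)⟩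
    have he2 : E.card + T.card ≤ d + (D ∩ T).card := by
      obtain ⟨W, hW, hWd⟩ := hDist_exists (hmax.1 w hw c hc)
      have hsub : E ∪ (T \ D) ⊆ W := by
        intro i hi
        rw [hW]
        rcases Finset.mem_union.mp hi with h | h
        · exact (hEw i h).2.symm
        · rw [Finset.mem_sdiff, hT, hD, not_not] at h
          rw [← h.2]; exact h.1.symm
      have hdj : Disjoint E (T \ D) := by
        rw [Finset.disjoint_left]
        intro i hi hi'
        exact (Finset.mem_sdiff.mp hi').2 (Finset.mem_sdiff.mp hi).1
      have h1 := Finset.card_le_card hsub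
      rw [Finset.card_union_of_disjoint hdj] at h1
      have h2 := Finset.card_sdiff_add_card_inter T D
      rw [Finset.inter_comm] at h2
      omega
    let wt : ℕ → Fin n → ℕ := fun i x => if x = w i then 0 else if x = c i then 2 else 1
    obtain ⟨M, hM⟩ : ∃ M, M + d = E.card + (D ∩ T).card + (k - T.card) :=
      ⟨E.card + (D ∩ T).card + (k - T.card) - d, by omega⟩
    have hMq : q + 1 ≤ M := by omega
    have hmatch : ∀ a ∈ F, M ≤ ∑ i ∈ E, wt i (a i) := by
      intro a ha
      obtain ⟨haS, haw, haT⟩ := hF a ha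
      obtain ⟨A, hA, -⟩ := hDist_exists haw.le
      rw [hDist_eq_card hA] at haw
      have hAk : A.card = k := by exact_mod_cast haw
      obtain ⟨X, hX, hXd⟩ := hDist_exists (hmax.1 a haS.1 c hc)
      have hTA : T ⊆ A := by
        intro i hi
        rw [hA, haT i hi]
        exact (hT i).1 hi
      let U := A ∪ D ∪ X
      have hpt : ∀ i ∈ U, (if i ∈ D then 1 else 0) + (if i ∈ A \ T then 1 else 0) ≤
          (if i ∈ X then 1 else 0) + (if i ∈ E then wt i (a i) else 0) := by
        intro i _
        have t1 := hT i
        have t2 := hD i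
        have t3 := hA i
        have t4 := hX i
        have t5 := haT i
        simp only [E, Finset.mem_sdiff, wt]
        by_cases c1 : i ∈ T
        · have t6 := t5 c1
          simp only [t2, t4, c1, t6]
          simp
        · have t6 : u i = w i := by
            by_contra h; exact c1 (t1.2 h)
          simp only [t2, t3, t4, c1, t6]
          by_cases c2 : a i = w i
          · simp [c2]
          · by_cases c3 : a i = c i
            · have c4 : ¬ c i = w i := fun h => c2 (c3.trans h)
              have c5 : ¬ w i = c i := fun h => c4 h.symm
              simp [c3, c4, c5]
            · by_cases c4 : w i = c i
              · simp [c2, c3, c4]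
              · simp [c2, c3, c4]
      have hs := Finset.sum_le_sum hpt
      rw [Finset.sum_add_distrib, Finset.sum_add_distrib] at hs
      simp only [← Finset.sum_filter, Finset.filter_mem_eq_inter] at hs
      have i1 : U ∩ D = D := Finset.inter_eq_right.mpr (by
        intro i hi; simp [U, hi])
      have i2 : U ∩ (A \ T) = A \ T := Finset.inter_eq_right.mpr (by
        intro i hi; simp [U, (Finset.mem_sdiff.mp hi).1])
      have i3 : U ∩ X = X := Finset.inter_eq_right.mpr (by
        intro i hi; simp [U, hi])
      have i4 : U ∩ E = E := Finset.inter_eq_right.mpr (by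
        intro i hi; simp [U, (Finset.mem_sdiff.mp hi).1])
      rw [i1, i2, i3, i4] at hs
      simp only [Finset.sum_const, smul_eq_mul, mul_one] at hs
      rw [Finset.card_sdiff_of_subset hTA, hAk] at hs
      omega
    set Bd : ℝ := (Sun (d + n) (2 * L) : ℝ) * ((n : ℝ) / 2) ^ q *
      ((2 * d - (T.card + 1) - L).choose q : ℝ) with hBd
    have hBd0 : 0 ≤ Bd := by positivity
    have hfib : ∀ i ∈ E, ∀ x, (wt i x : ℝ) * ((F.filter (fun a => a i = x)).card : ℝ) ≤
        (wt i x : ℝ) * Bd := by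
      intro i hi x
      by_cases hx : x = w i
      · simp [wt, hx]
      · have hiT : i ∉ T := (Finset.mem_sdiff.mp hi).2
        have hci : (insert i T).card = T.card + 1 := Finset.card_insert_of_notMem hiT
        have := ih (Function.update u i x) (insert i T) (by
            intro j
            by_cases hj : j = i
            · subst hj; simp [hx]
            · simp [hj, hT j]) (by rw [hci]; omega) (F.filter (fun a => a i = x)) (by
            intro a ha
            obtain ⟨ha, hax⟩ := Finset.mem_filter.mp ha
            obtain ⟨h1, h2, h3⟩ := hF a ha
            refine ⟨h1, h2, ?_⟩
            intro j hj
            by_cases hji : j = i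
            · subst hji; simpa using hax
            · rw [Function.update_of_ne hji]
              exact h3 j (Finset.mem_of_mem_insert_of_ne hj hji))
        rw [hci] at this
        exact mul_le_mul_of_nonneg_left this (by positivity)
    have hwtsum : ∀ i ∈ E, ∑ x, (wt i x : ℝ) = n := by
      intro i hi
      have hne := (hEw i hi).2
      have : ∀ x, (wt i x : ℝ) = 1 + (if x = c i then 1 else 0) - (if x = w i then 1 else 0) := by
        intro x
        simp only [wt]
        by_cases h1 : x = w i
        · have : x ≠ c i := fun h => hne (h.symm.trans h1)
          simp [h1, hne.symm]
        · by_cases h2 : x = c i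
          · simp [h2, hne]; norm_num
          · simp [h1, h2]
      simp only [this, Finset.sum_sub_distrib, Finset.sum_add_distrib]
      simp
    have hdc : ∑ a ∈ F, ∑ i ∈ E, (wt i (a i) : ℝ) =
        ∑ i ∈ E, ∑ x, (wt i x : ℝ) * ((F.filter (fun a => a i = x)).card : ℝ) := by
      rw [Finset.sum_comm]
      refine Finset.sum_congr rfl (fun i _ => ?_)
      rw [← Finset.sum_fiberwise F (fun a => a i) (fun a => (wt i (a i) : ℝ))]
      refine Finset.sum_congr rfl (fun x _ => ?_)
      rw [Finset.sum_congr rfl (g := fun _ => (wt i x : ℝ))]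
      · simp [mul_comm]
      · intro a ha
        rw [(Finset.mem_filter.mp ha).2]
    have hmain : (F.card : ℝ) * M ≤ n * E.card * Bd := by
      calc (F.card : ℝ) * M = ∑ a ∈ F, (M : ℝ) := by simp
        _ ≤ ∑ a ∈ F, ∑ i ∈ E, (wt i (a i) : ℝ) := by
            apply Finset.sum_le_sum
            intro a ha
            exact_mod_cast hmatch a ha
        _ = _ := hdc
        _ ≤ ∑ i ∈ E, ∑ x, (wt i x : ℝ) * Bd :=
            Finset.sum_le_sum (fun i hi => Finset.sum_le_sum (fun x _ => hfib i hi x))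
        _ = ∑ i ∈ E, (n : ℝ) * Bd := by
            refine Finset.sum_congr rfl (fun i hi => ?_)
            rw [← Finset.sum_mul, hwtsum i hi]
        _ = _ := by simp; ring
    have har := arith_step hk hkd hM (by omega) he2
    obtain ⟨y, hy⟩ : ∃ y, 2 * d - T.card - L = y + 1 := ⟨2 * d - T.card - L - 1, by omega⟩
    have hy' : 2 * d - (T.card + 1) - L = y := by omega
    rw [hy'] at hBd
    rw [hy] at har ⊢
    have hch : ((y + 1 : ℕ) : ℝ) * (y.choose q : ℝ) =
        ((y + 1).choose (q + 1) : ℝ) * ((q + 1 : ℕ) : ℝ) := by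
      exact_mod_cast Nat.add_one_mul_choose_eq y q
    have har' : (2 : ℝ) * E.card * ((q + 1 : ℕ) : ℝ) ≤ ((y + 1 : ℕ) : ℝ) * M := by
      exact_mod_cast har
    have hMpos : (0 : ℝ) < M := by exact_mod_cast (by omega : 0 < M)
    have hq : (0 : ℝ) < ((q + 1 : ℕ) : ℝ) := by positivity
    have hR : (Sun (d + n) (2 * L) : ℝ) * ((n : ℝ) / 2) ^ (q + 1) * ((y + 1).choose (q + 1) : ℝ) *
        ((q + 1 : ℕ) : ℝ) = (n : ℝ) / 2 * ((y + 1 : ℕ) : ℝ) * Bd := by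
      rw [hBd, mul_assoc _ _ ((q + 1 : ℕ) : ℝ), ← hch]
      ring
    refine le_of_mul_le_mul_right ?_ (mul_pos hq hMpos)
    calc (F.card : ℝ) * (((q + 1 : ℕ) : ℝ) * M) = ((F.card : ℝ) * M) * ((q + 1 : ℕ) : ℝ) := by ring
      _ ≤ (n * E.card * Bd) * ((q + 1 : ℕ) : ℝ) := by gcongr
      _ = (n / 2 * Bd) * (2 * E.card * ((q + 1 : ℕ) : ℝ)) := by ring
      _ ≤ (n / 2 * Bd) * (((y + 1 : ℕ) : ℝ) * M) := by gcongr
      _ = ((n : ℝ) / 2 * ((y + 1 : ℕ) : ℝ) * Bd) * M := by ring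
      _ = _ := by rw [← hR]; ring

theorem stmt11 (n d L : ℕ) (hn : 2 ≤ n) (hd : 1 ≤ d) (hL : 2 * L ≤ d)
    (S : Set (ℕ → Fin n)) (hmax : IsDMaximal n d S) (hball : ¬ ContainsBall n S (L + 1))
    (w : ℕ → Fin n) (hw : w ∈ S)
    (ℓ m k : ℕ) (hmk : m + L ≤ k) (hkd : k ≤ d)
    (t : ℕ → Option (Fin n)) (htfin : {i | t i ≠ none}.Finite)
    (hwt : {i | t i ≠ none}.ncard = m) (hreg : RegularWrt n w t) :
    {a ∈ Sell n S ℓ | hDist n a w = (k : ℕ∞) ∧ Fits n a t}.Finite ∧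
      (({a ∈ Sell n S ℓ | hDist n a w = (k : ℕ∞) ∧ Fits n a t}.ncard : ℝ) ≤
        (Sun (d + n) (2 * L) : ℝ) * ((n : ℝ) / 2) ^ (k - m - L) *
          ((2 * d - m - L).choose (k - m - L) : ℝ)) := by
  classical
  let u : ℕ → Fin n := fun i => (t i).getD (w i)
  let T := htfin.toFinset
  have hTm : T.card = m := by
    rw [← hwt, Set.ncard_eq_toFinset_card _ htfin]
  have hT : ∀ i, i ∈ T ↔ u i ≠ w i := by
    intro i
    have hr := hreg i
    simp only [T, Set.Finite.mem_toFinset, Set.mem_ofPred_eq, u]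
    cases h : t i with
    | none => simp
    | some x =>
      rw [h] at hr
      simp only [Option.getD_some]
      simp only [ne_eq, Option.some.injEq] at hr
      simp [hr]
  set Z := {a ∈ Sell n S ℓ | hDist n a w = (k : ℕ∞) ∧ Fits n a t} with hZ
  have hkey : ∀ F : Finset (ℕ → Fin n), (F : Set (ℕ → Fin n)) ⊆ Z →
      (F.card : ℝ) ≤ (Sun (d + n) (2 * L) : ℝ) * ((n : ℝ) / 2) ^ (k - m - L) *
          ((2 * d - m - L).choose (k - m - L) : ℝ) := by
    intro F hF
    have := induct (ℓ := ℓ) hn hd hmax hball w hw hkd (k - m - L) u T hT (by omega) F (by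
      intro a ha
      obtain ⟨h1, h2, h3⟩ := hF ha
      refine ⟨h1, h2, ?_⟩
      intro i hi
      simp only [T, Set.Finite.mem_toFinset, Set.mem_ofPred_eq] at hi
      obtain ⟨x, hx⟩ := Option.ne_none_iff_exists'.mp hi
      simp only [u, hx, Option.getD_some]
      exact h3 i x hx)
    rwa [hTm] at this
  have hfin : Z.Finite := by
    by_contra hinf
    obtain ⟨N, hN⟩ := exists_nat_gt ((Sun (d + n) (2 * L) : ℝ) * ((n : ℝ) / 2) ^ (k - m - L) *
          ((2 * d - m - L).choose (k - m - L) : ℝ))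
    obtain ⟨F, hF, hFc⟩ := Set.Infinite.exists_subset_card_eq hinf N
    have := hkey F hF
    rw [hFc] at this
    linarith
  refine ⟨hfin, ?_⟩
  rw [Set.ncard_eq_toFinset_card _ hfin]
  exact hkey _ (by simp)
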